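/- Let F ∈ GL(n,k) with n ≥ 2, and let q ∈ k* satisfy q² + tr(F·ᵀF⁻¹)·q + 1 = 0. Then B(E_q,F) is a B(E_q)-B(F)-bigalois extension: B(E_q,F) ≠ 0; the unique algebra homomorphism α : B(E_q,F) → B(E_q) ⊗ B(E_q,F) with α(z_{ij}) = Σ_{k=1}^2 a_{ik} ⊗ z_{kj} yields a bijective Galois map κ_l = (id ⊗ m) ∘ (α ⊗ id) : B(E_q,F) ⊗ B(E_q,F) → B(E_q) ⊗ B(E_q,F); and the unique algebra homomorphism β : B(E_q,F) → B(E_q,F) ⊗ B(F) with β(z_{ij}) = Σ_{k=1}^n z_{ik} ⊗ b_{kj} yields a bijective Galois map κ_r = (m ⊗ id) ∘ (id ⊗ β) : B(E_q,F) ⊗ B(E_q,F) → B(E_q,F) ⊗ B(F), where m is the multiplication of B(E_q,F). -/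

import Mathlib

open scoped TensorProduct
open Matrix

noncomputable section

variable (k : Type) [Field k]

/-- The matrix of free generators of the free algebra on `Fin m × Fin n`. -/
def gens (m n : ℕ) : Matrix (Fin m) (Fin n) (FreeAlgebra k (Fin m × Fin n)) :=
  Matrix.of fun i j => FreeAlgebra.ι k (i, j)

/-- A scalar matrix viewed as a matrix over a `k`-algebra. -/
def liftMat {A : Type} [Semiring A] [Algebra k A] {p q : ℕ}
    (M : Matrix (Fin p) (Fin q) k) : Matrix (Fin p) (Fin q) A :=
  M.map (algebraMap k A)

/-- The defining relations of the algebra `B(E,F)`: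
`F⁻¹ * ᵀz * E * z = 1` and `z * F⁻¹ * ᵀz * E = 1`. -/
inductive BRel {m n : ℕ} (E : Matrix (Fin m) (Fin m) k) (F : Matrix (Fin n) (Fin n) k) :
    FreeAlgebra k (Fin m × Fin n) → FreeAlgebra k (Fin m × Fin n) → Prop
  | left (i j : Fin n) : BRel E F
      ((liftMat k (A := FreeAlgebra k (Fin m × Fin n)) F⁻¹ * (gens k m n)ᵀ *
          liftMat k (A := FreeAlgebra k (Fin m × Fin n)) E * gens k m n :
          Matrix (Fin n) (Fin n) (FreeAlgebra k (Fin m × Fin n))) i j)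
      ((1 : Matrix (Fin n) (Fin n) (FreeAlgebra k (Fin m × Fin n))) i j)
  | right (i j : Fin m) : BRel E F
      ((gens k m n * liftMat k (A := FreeAlgebra k (Fin m × Fin n)) F⁻¹ * (gens k m n)ᵀ *
          liftMat k (A := FreeAlgebra k (Fin m × Fin n)) E :
          Matrix (Fin m) (Fin m) (FreeAlgebra k (Fin m × Fin n))) i j)
      ((1 : Matrix (Fin m) (Fin m) (FreeAlgebra k (Fin m × Fin n))) i j)

/-- The algebra `B(E,F)`.  The Hopf algebra `B(E)` is `BB k E E`. -/
abbrev BB {m n : ℕ} (E : Matrix (Fin m) (Fin m) k) (F : Matrix (Fin n) (Fin n) k) :=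
  RingQuot (BRel k E F)

/-- The matrix of generators of `B(E,F)`. -/
def ZMat {m n : ℕ} (E : Matrix (Fin m) (Fin m) k) (F : Matrix (Fin n) (Fin n) k) :
    Matrix (Fin m) (Fin n) (BB k E F) :=
  Matrix.of fun i j => RingQuot.mkAlgHom k (BRel k E F) (gens k m n i j)
/-- The matrix `E_q` with rows `(0, 1)` and `(−q⁻¹, 0)`, so that `B(E_q) = O(SL_q(2))`. -/
def Eqm (q : k) : Matrix (Fin 2) (Fin 2) k := !![0, 1; -q⁻¹, 0]

/-!
The defining relations say that the generator matrix `z` of `B(E,F)` is invertible with inverse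
`F⁻¹ ᵀz E`. Cocomposition `B(E) → B(E,F) ⊗ B(F,E)` followed by the antipode `B(F,E) → B(E,F)ᵒᵖ` in
the second factor is an algebra map, and it inverts `κₗ` on `B(E) ⊗ 1`; as `κₗ` is linear over the
second factor, this inverts `κₗ`. The argument for `κᵣ` is symmetric.

To see that `B(E_q,F) ≠ 0`, write `x` and `y` for the rows of `z`. The relations become the exchange
relation `y_i x_j = q x_i y_j - q F_ij` together with the values of the four contractions of `x` and
`y` against `F⁻¹`. Let `x_i` act on the free algebra on `n` letters by left multiplication, and let
`y_i` act by the exchange relation and `y_i 1 = c_i`, where `c ≠ 0` is isotropic for `F⁻¹`; such a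
`c` exists over the algebraic closure because `n ≥ 2`. By the condition on `tr(F ᵀF⁻¹)` the
contractions take the required values modulo a left ideal stable under all `x_i` and `y_i`. This
ideal is proper, since its elements annihilate the vector `((-q)^m)_m` of a module on which `x_i`
acts as a shift weighted by a sequence of points.
-/

section Relations

variable {k} {A : Type} [Semiring A] [Algebra k A] {m n p : ℕ}

local notation "ℓ[" R "]" => liftMat _ (A := R)

lemma liftMat_one : ℓ[A] (1 : Matrix (Fin n) (Fin n) k) = 1 :=
  Matrix.map_one _ (map_zero _) (map_one _)

lemma liftMat_mul (M : Matrix (Fin m) (Fin n) k) (N : Matrix (Fin n) (Fin p) k) :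
    (ℓ[A] (M * N) : Matrix _ _ A) = ℓ[A] M * ℓ[A] N :=
  Matrix.map_mul

lemma liftMat_map_algHom {B : Type} [Semiring B] [Algebra k B] (M : Matrix (Fin m) (Fin n) k)
    (f : A →ₐ[k] B) : (ℓ[A] M : Matrix _ _ A).map f = ℓ[B] M := by
  ext i j
  exact f.commutes (M i j)

lemma transpose_mul_of_commute {R l o r : Type*} [NonUnitalNonAssocSemiring R] [Fintype o]
    {X : Matrix l o R} {Y : Matrix o r R} (hXY : ∀ i s j, Commute (X i s) (Y s j)) :
    (X * Y)ᵀ = Yᵀ * Xᵀ := by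
  ext i j
  exact Finset.sum_congr rfl fun s _ => hXY j s i

lemma transpose_liftMat_mul (M : Matrix (Fin m) (Fin n) k) (X : Matrix (Fin n) (Fin p) A) :
    (ℓ[A] M * X)ᵀ = Xᵀ * ℓ[A] Mᵀ :=
  transpose_mul_of_commute fun _ _ _ => Algebra.commutes _ _

lemma transpose_mul_liftMat (X : Matrix (Fin m) (Fin n) A) (M : Matrix (Fin n) (Fin p) k) :
    (X * ℓ[A] M)ᵀ = ℓ[A] Mᵀ * Xᵀ :=
  transpose_mul_of_commute fun _ _ _ => (Algebra.commutes _ _).symm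

lemma map_op_mul_map_op {R l o r : Type*} [NonUnitalNonAssocSemiring R] [Fintype o]
    (X : Matrix l o R) (Y : Matrix o r R) :
    X.map MulOpposite.op * Y.map MulOpposite.op = ((Yᵀ * Xᵀ)ᵀ).map MulOpposite.op := by
  ext i j
  simp [Matrix.mul_apply]

variable {E : Matrix (Fin m) (Fin m) k} {F : Matrix (Fin n) (Fin n) k}
  {G : Matrix (Fin p) (Fin p) k} {X : Matrix (Fin m) (Fin n) A}

lemma liftMat_mul_inv (hF : IsUnit F.det) :
    (ℓ[A] F * ℓ[A] F⁻¹ : Matrix _ _ A) = 1 := by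
  rw [← liftMat_mul, Matrix.mul_nonsing_inv F hF, liftMat_one]

lemma liftMat_inv_mul (hF : IsUnit F.det) :
    (ℓ[A] F⁻¹ * ℓ[A] F : Matrix _ _ A) = 1 := by
  rw [← liftMat_mul, Matrix.nonsing_inv_mul F hF, liftMat_one]

lemma inv_map_algebraMap {L : Type} [Field L] [Algebra k L] (hF : IsUnit F.det) :
    (F.map (algebraMap k L))⁻¹ = F⁻¹.map (algebraMap k L) :=
  Matrix.inv_eq_left_inv <| by
    rw [← Matrix.map_mul, Matrix.nonsing_inv_mul F hF, Matrix.map_one _ (map_zero _) (map_one _)]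

/-- `X` is an `A`-valued point of `B(E,F)`: a matrix over the `k`-algebra `A` that satisfies the
defining relations of `B(E,F)`. -/
structure SatisfiesBRel (E : Matrix (Fin m) (Fin m) k) (F : Matrix (Fin n) (Fin n) k)
    (X : Matrix (Fin m) (Fin n) A) : Prop where
  left : ℓ[A] F⁻¹ * Xᵀ * ℓ[A] E * X = 1
  right : X * ℓ[A] F⁻¹ * Xᵀ * ℓ[A] E = 1

namespace SatisfiesBRel

lemma transpose_mul_mul (hX : SatisfiesBRel E F X) (hF : IsUnit F.det) :
    Xᵀ * ℓ[A] E * X = ℓ[A] F :=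
  calc Xᵀ * ℓ[A] E * X
      = ℓ[A] F * ℓ[A] F⁻¹ * (Xᵀ * ℓ[A] E * X) := by
        rw [liftMat_mul_inv hF, Matrix.one_mul]
    _ = ℓ[A] F * (ℓ[A] F⁻¹ * Xᵀ * ℓ[A] E * X) := by simp only [Matrix.mul_assoc]
    _ = ℓ[A] F := by rw [hX.left, Matrix.mul_one]

lemma mul_mul_transpose (hX : SatisfiesBRel E F X) (hE : IsUnit E.det) :
    X * ℓ[A] F⁻¹ * Xᵀ = ℓ[A] E⁻¹ :=
  calc X * ℓ[A] F⁻¹ * Xᵀ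
      = X * ℓ[A] F⁻¹ * Xᵀ * (ℓ[A] E * ℓ[A] E⁻¹) := by
        rw [liftMat_mul_inv hE, Matrix.mul_one]
    _ = X * ℓ[A] F⁻¹ * Xᵀ * ℓ[A] E * ℓ[A] E⁻¹ := by simp only [Matrix.mul_assoc]
    _ = ℓ[A] E⁻¹ := by rw [hX.right, Matrix.one_mul]

lemma of_bilin (hE : IsUnit E.det) (hF : IsUnit F.det)
    (hXEX : Xᵀ * ℓ[A] E * X = ℓ[A] F)
    (hXFX : X * ℓ[A] F⁻¹ * Xᵀ = ℓ[A] E⁻¹) : SatisfiesBRel E F X where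
  left := by
    rw [Matrix.mul_assoc, Matrix.mul_assoc, ← Matrix.mul_assoc Xᵀ, hXEX, liftMat_inv_mul hF]
  right := by rw [hXFX, liftMat_inv_mul hE]

lemma map {B : Type} [Semiring B] [Algebra k B] (hX : SatisfiesBRel E F X) (f : A →ₐ[k] B) :
    SatisfiesBRel E F (X.map f) where
  left := by
    simpa only [Matrix.map_mul, liftMat_map_algHom, Matrix.map_one f (map_zero f) (map_one f),
      ← Matrix.transpose_map] using congrArg (Matrix.map · f) hX.left
  right := by
    simpa only [Matrix.map_mul, liftMat_map_algHom, Matrix.map_one f (map_zero f) (map_one f),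
      ← Matrix.transpose_map] using congrArg (Matrix.map · f) hX.right

lemma mul {Y : Matrix (Fin n) (Fin p) A} (hX : SatisfiesBRel E F X) (hY : SatisfiesBRel F G Y)
    (hF : IsUnit F.det) (hXY : ∀ i j r s, Commute (X i j) (Y r s)) :
    SatisfiesBRel E G (X * Y) := by
  have hT : (X * Y)ᵀ = Yᵀ * Xᵀ := transpose_mul_of_commute fun i s j => hXY i s s j
  constructor
  · calc ℓ[A] G⁻¹ * (X * Y)ᵀ * ℓ[A] E * (X * Y)
        = ℓ[A] G⁻¹ * Yᵀ * (Xᵀ * ℓ[A] E * X) * Y := by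
          rw [hT]; simp only [Matrix.mul_assoc]
      _ = 1 := by rw [hX.transpose_mul_mul hF, hY.left]
  · calc X * Y * ℓ[A] G⁻¹ * (X * Y)ᵀ * ℓ[A] E
        = X * (Y * ℓ[A] G⁻¹ * Yᵀ) * Xᵀ * ℓ[A] E := by
          rw [hT]; simp only [Matrix.mul_assoc]
      _ = 1 := by rw [hY.mul_mul_transpose hF, hX.right]

lemma restrictScalars {L : Type} [Field L] [Algebra k L] [Algebra L A] [IsScalarTower k L A]
    (hX : SatisfiesBRel (E.map (algebraMap k L)) (F.map (algebraMap k L)) X)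
    (hF : IsUnit F.det) : SatisfiesBRel E F X := by
  have hlift (r s : ℕ) (M : Matrix (Fin r) (Fin s) k) :
      (liftMat L (A := A) (M.map (algebraMap k L)) : Matrix _ _ A) = ℓ[A] M := by
    ext i j
    exact (IsScalarTower.algebraMap_apply k L A (M i j)).symm
  refine ⟨?_, ?_⟩
  · simpa only [inv_map_algebraMap hF, hlift] using hX.left
  · simpa only [inv_map_algebraMap hF, hlift] using hX.right

end SatisfiesBRel

/-- The matrix `F⁻¹ * ᵀX * E`, which the defining relations of `B(E,F)` make a two-sided inverse
of `X`. -/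
def bInverse (E : Matrix (Fin m) (Fin m) k) (F : Matrix (Fin n) (Fin n) k)
    (X : Matrix (Fin m) (Fin n) A) : Matrix (Fin n) (Fin m) A :=
  ℓ[A] F⁻¹ * Xᵀ * ℓ[A] E

namespace SatisfiesBRel

lemma bInverse_mul (hX : SatisfiesBRel E F X) : bInverse E F X * X = 1 :=
  hX.left

lemma mul_bInverse (hX : SatisfiesBRel E F X) : X * bInverse E F X = 1 := by
  rw [bInverse, ← Matrix.mul_assoc, ← Matrix.mul_assoc, hX.right]

lemma bInverse_op (hX : SatisfiesBRel E F X) (hE : IsUnit E.det) (hF : IsUnit F.det) :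
    SatisfiesBRel F E ((bInverse E F X).map MulOpposite.op) := by
  have hVt : (bInverse E F X)ᵀ = ℓ[A] Eᵀ * X * ℓ[A] F⁻¹ᵀ := by
    rw [bInverse, transpose_mul_liftMat, transpose_liftMat_mul, Matrix.transpose_transpose,
      Matrix.mul_assoc]
  have hFt : (ℓ[A] F⁻¹ᵀ * ℓ[A] Fᵀ : Matrix _ _ A) = 1 := by
    rw [Matrix.transpose_nonsing_inv, liftMat_inv_mul (by rwa [Matrix.det_transpose])]
  have hEt : (ℓ[A] E⁻¹ᵀ * ℓ[A] Eᵀ : Matrix _ _ A) = 1 := by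
    rw [Matrix.transpose_nonsing_inv, liftMat_inv_mul (by rwa [Matrix.det_transpose])]
  have hVFV : (bInverse E F X)ᵀ * (ℓ[A] Fᵀ * bInverse E F X) = ℓ[A] Eᵀ :=
    calc _ = ℓ[A] Eᵀ * X * (ℓ[A] F⁻¹ᵀ * ℓ[A] Fᵀ) * bInverse E F X := by
          rw [hVt]; simp only [Matrix.mul_assoc]
      _ = ℓ[A] Eᵀ := by
          rw [hFt, Matrix.mul_one, Matrix.mul_assoc, hX.mul_bInverse, Matrix.mul_one]
  have hVEV : bInverse E F X * (ℓ[A] E⁻¹ᵀ * (bInverse E F X)ᵀ) = ℓ[A] F⁻¹ᵀ :=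
    calc _ = bInverse E F X * (ℓ[A] E⁻¹ᵀ * ℓ[A] Eᵀ) * X * ℓ[A] F⁻¹ᵀ := by
          rw [hVt]; simp only [Matrix.mul_assoc]
      _ = ℓ[A] F⁻¹ᵀ := by rw [hEt, Matrix.mul_one, hX.bInverse_mul, Matrix.one_mul]
  have hlift (r s : ℕ) (M : Matrix (Fin r) (Fin s) k) :
      ℓ[Aᵐᵒᵖ] M = (ℓ[A] Mᵀ)ᵀ.map MulOpposite.op := rfl
  refine of_bilin hF hE ?_ ?_
  · rw [hlift _ _ F, hlift _ _ E, ← hVFV, ← Matrix.transpose_map, map_op_mul_map_op,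
      map_op_mul_map_op]
    simp only [Matrix.transpose_transpose]
  · rw [hlift _ _ E⁻¹, hlift _ _ F⁻¹, ← hVEV, ← Matrix.transpose_map, map_op_mul_map_op,
      map_op_mul_map_op]
    simp only [Matrix.transpose_transpose]

end SatisfiesBRel

end Relations

namespace BB

variable {k} {A : Type} [Semiring A] [Algebra k A] {m n p : ℕ}
  {E : Matrix (Fin m) (Fin m) k} {F : Matrix (Fin n) (Fin n) k} {G : Matrix (Fin p) (Fin p) k}

lemma satisfiesBRel_zMat : SatisfiesBRel E F (ZMat k E F) := by
  let π := RingQuot.mkAlgHom k (BRel k E F)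
  have hZ : ZMat k E F = (gens k m n).map π := rfl
  have h1 (r : ℕ) : (1 : Matrix (Fin r) (Fin r) (BB k E F)) = Matrix.map 1 π :=
    (Matrix.map_one π (map_zero π) (map_one π)).symm
  constructor <;>
    rw [hZ, h1, ← Matrix.transpose_map, ← liftMat_map_algHom _ π, ← liftMat_map_algHom _ π,
      ← Matrix.map_mul, ← Matrix.map_mul, ← Matrix.map_mul]
  · ext i j
    exact RingQuot.mkAlgHom_rel k (BRel.left i j)
  · ext i j
    exact RingQuot.mkAlgHom_rel k (BRel.right i j)

/-- The universal property of `B(E,F)`: a point `X` of `B(E,F)` with values in `A` amounts to an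
algebra homomorphism `B(E,F) → A`. -/
def lift {X : Matrix (Fin m) (Fin n) A} (hX : SatisfiesBRel E F X) : BB k E F →ₐ[k] A :=
  RingQuot.liftAlgHom k ⟨FreeAlgebra.lift k fun ij : Fin m × Fin n => X ij.1 ij.2, by
    set φ := FreeAlgebra.lift k fun ij : Fin m × Fin n => X ij.1 ij.2 with hφ
    have hgens : (gens k m n).map φ = X := by
      ext i j
      simp [gens, hφ]
    have h1 (r : ℕ) : (1 : Matrix (Fin r) (Fin r) A) = Matrix.map 1 φ :=
      (Matrix.map_one φ (map_zero φ) (map_one φ)).symm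
    have hleft := hX.left
    have hright := hX.right
    rw [← hgens, h1, ← Matrix.transpose_map, ← liftMat_map_algHom _ φ, ← liftMat_map_algHom _ φ,
      ← Matrix.map_mul, ← Matrix.map_mul, ← Matrix.map_mul] at hleft hright
    rintro _ _ (⟨i, j⟩ | ⟨i, j⟩)
    · exact congrFun (congrFun hleft i) j
    · exact congrFun (congrFun hright i) j⟩

lemma lift_zMat {X : Matrix (Fin m) (Fin n) A} (hX : SatisfiesBRel E F X) (i j) :
    lift hX (ZMat k E F i j) = X i j := by
  simp [lift, ZMat, gens]

lemma adjoin_range_zMat :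
    Algebra.adjoin k (Set.range (Function.uncurry (ZMat k E F))) = ⊤ := by
  have hrange : Set.range (Function.uncurry (ZMat k E F)) =
      RingQuot.mkAlgHom k (BRel k E F) '' Set.range (FreeAlgebra.ι k) := by
    rw [← Set.range_comp]
    rfl
  rw [hrange, ← AlgHom.map_adjoin, FreeAlgebra.adjoin_range_ι, Algebra.map_top,
    AlgHom.range_eq_top]
  exact RingQuot.mkAlgHom_surjective k _

lemma algHom_ext {f g : BB k E F →ₐ[k] A} (h : ∀ i j, f (ZMat k E F i j) = g (ZMat k E F i j)) :
    f = g :=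
  AlgHom.ext_of_adjoin_eq_top adjoin_range_zMat <| Set.forall_mem_range.mpr fun ij => h ij.1 ij.2

/-- The cocomposition `B(E,G) → B(E,F) ⊗ B(F,G)`, of which the comultiplications and coactions
are the cases where two of the three matrices agree. -/
def comul (hF : IsUnit F.det) : BB k E G →ₐ[k] BB k E F ⊗[k] BB k F G :=
  lift <| SatisfiesBRel.mul
    ((satisfiesBRel_zMat (E := E) (F := F)).map Algebra.TensorProduct.includeLeft)
    ((satisfiesBRel_zMat (E := F) (F := G)).map Algebra.TensorProduct.includeRight) hF
    fun i j r s => by simp [Commute, SemiconjBy]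

lemma comul_zMat (hF : IsUnit F.det) (i j) :
    comul hF (ZMat k E G i j) = ∑ l, ZMat k E F i l ⊗ₜ[k] ZMat k F G l j := by
  simp [comul, lift_zMat, Matrix.mul_apply]

lemma existsUnique_comul (hF : IsUnit F.det) :
    ∃! f : BB k E G →ₐ[k] BB k E F ⊗[k] BB k F G,
      ∀ i j, f (ZMat k E G i j) = ∑ l, ZMat k E F i l ⊗ₜ[k] ZMat k F G l j :=
  ⟨comul hF, comul_zMat hF, fun f hf => algHom_ext fun i j => by rw [hf, comul_zMat]⟩

/-- The antipode `B(F,E) → B(E,F)`, an algebra antihomomorphism sending the matrix of generators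
of `B(F,E)` to the inverse of the matrix of generators of `B(E,F)`. -/
def antipode (hE : IsUnit E.det) (hF : IsUnit F.det) : BB k F E →ₐ[k] (BB k E F)ᵐᵒᵖ :=
  lift (satisfiesBRel_zMat.bInverse_op hE hF)

lemma antipode_zMat (hE : IsUnit E.det) (hF : IsUnit F.det) (i j) :
    antipode hE hF (ZMat k F E i j) = MulOpposite.op (bInverse E F (ZMat k E F) i j) :=
  lift_zMat _ i j

lemma nontrivial_of_nontrivial_map {L : Type} [Field L] [Algebra k L] (hF : IsUnit F.det)
    [Nontrivial (BB L (E.map (algebraMap k L)) (F.map (algebraMap k L)))] :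
    Nontrivial (BB k E F) :=
  (lift ((satisfiesBRel_zMat (k := L)).restrictScalars hF)).toRingHom.domain_nontrivial

end BB

section GaloisMaps

open MulOpposite

variable {R B Z : Type*} [CommSemiring R] [Semiring B] [Algebra R B] [Semiring Z] [Algebra R Z]
  {ι κ : Type*} [Fintype ι] [Fintype κ]
  {a : Matrix ι ι B} {b : Matrix κ κ B} {z : Matrix ι κ Z} {v : Matrix κ ι Z}

lemma apply_algHom_eq_of_adjoin_eq_top {A C : Type*} [Semiring A] [Algebra R A] [Semiring C]
    [Algebra R C] {f : A →ₗ[R] C} {φ : Z →ₐ[R] A} {ψ : Z →ₐ[R] C} {s : Set Z}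
    (hs : Algebra.adjoin R s = ⊤) (hgen : ∀ x ∈ s, f (φ x) = ψ x) (hone : f 1 = 1)
    (hmul : ∀ x y, f (φ x) = ψ x → f (φ y) = ψ y → f (φ x * φ y) = ψ x * ψ y) (x : Z) :
    f (φ x) = ψ x := by
  have hx : x ∈ Algebra.adjoin R s := hs ▸ Algebra.mem_top
  induction hx using Algebra.adjoin_induction with
  | mem x hx => exact hgen x hx
  | algebraMap r => simp only [Algebra.algebraMap_eq_smul_one, map_smul, map_one, hone]
  | add x y _ _ hx hy => simp only [map_add, hx, hy]
  | mul x y _ _ hx hy => rw [map_mul φ, map_mul ψ, hmul x y hx hy]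

/-- The Galois map `κₗ = (id ⊗ m) ∘ (α ⊗ id)` of a map `α : Z → B ⊗ Z`. -/
def galoisLeft (α : Z →ₐ[R] B ⊗[R] Z) : Z ⊗[R] Z →ₗ[R] B ⊗[R] Z :=
  LinearMap.lTensor B (LinearMap.mul' R Z) ∘ₗ (TensorProduct.assoc R B Z Z).toLinearMap ∘ₗ
    LinearMap.rTensor Z α.toLinearMap

/-- The Galois map `κₗ` of `α : Z → B ⊗ Z`, with the second factor of its domain replaced by
`Zᵐᵒᵖ` so that it is compatible with products. -/
def galoisLeftOp (α : Z →ₐ[R] B ⊗[R] Z) : Z ⊗[R] Zᵐᵒᵖ →ₗ[R] B ⊗[R] Z :=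
  galoisLeft α ∘ₗ LinearMap.lTensor Z (opLinearEquiv R).symm.toLinearMap

/-- The candidate inverse of the Galois map `κₗ` determined by `γ : B → Z ⊗ Zᵐᵒᵖ`, the inverse of
`κₗ` on `B ⊗ 1` (the translation map). -/
def galoisLeftInv (γ : B →ₐ[R] Z ⊗[R] Zᵐᵒᵖ) : B ⊗[R] Z →ₗ[R] Z ⊗[R] Zᵐᵒᵖ :=
  TensorProduct.lift <| ((LinearMap.mul R (Z ⊗[R] Zᵐᵒᵖ)).flip.comp γ.toLinearMap).compl₂
    (Algebra.TensorProduct.includeRight.toLinearMap ∘ₗ (opLinearEquiv R).toLinearMap)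

lemma galoisLeft_tmul (α : Z →ₐ[R] B ⊗[R] Z) (x y : Z) :
    galoisLeft α (x ⊗ₜ y) = α x * (1 ⊗ₜ y) := by
  simp only [galoisLeft, LinearMap.comp_apply, LinearMap.rTensor_tmul, AlgHom.toLinearMap_apply,
    LinearEquiv.coe_coe]
  induction α x using TensorProduct.induction_on with
  | zero => simp
  | tmul b w => simp
  | add ξ η hξ hη => rw [TensorProduct.add_tmul, map_add, map_add, hξ, hη, add_mul]

lemma galoisLeftOp_tmul (α : Z →ₐ[R] B ⊗[R] Z) (x : Z) (y : Zᵐᵒᵖ) :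
    galoisLeftOp α (x ⊗ₜ y) = α x * (1 ⊗ₜ unop y) :=
  galoisLeft_tmul α x (unop y)

lemma galoisLeftInv_tmul (γ : B →ₐ[R] Z ⊗[R] Zᵐᵒᵖ) (b : B) (w : Z) :
    galoisLeftInv γ (b ⊗ₜ w) = (1 ⊗ₜ op w) * γ b :=
  rfl

lemma galoisLeftOp_mul_of_eq_tmul_one {α : Z →ₐ[R] B ⊗[R] Z} {η : Z ⊗[R] Zᵐᵒᵖ} {b : B}
    (hη : galoisLeftOp α η = b ⊗ₜ 1) (ξ : Z ⊗[R] Zᵐᵒᵖ) :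
    galoisLeftOp α (ξ * η) = galoisLeftOp α ξ * (b ⊗ₜ 1) := by
  have hmul (x : Z) (y : Zᵐᵒᵖ) :
      galoisLeftOp α ((x ⊗ₜ y) * η) = α x * galoisLeftOp α η * (1 ⊗ₜ unop y) := by
    clear hη
    induction η using TensorProduct.induction_on with
    | zero => simp
    | tmul x' y' => simp [galoisLeftOp_tmul, mul_assoc]
    | add ξ η hξ hη => rw [mul_add, map_add, map_add, hξ, hη, mul_add, add_mul]
  induction ξ using TensorProduct.induction_on with
  | zero => simp
  | tmul x y => rw [hmul, hη, galoisLeftOp_tmul, mul_assoc, mul_assoc]; simp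
  | add ξ ξ' hξ hξ' => rw [add_mul, map_add, map_add, hξ, hξ', add_mul]

lemma galoisLeftInv_mul_of_eq_tmul_one {γ : B →ₐ[R] Z ⊗[R] Zᵐᵒᵖ} {ξ : B ⊗[R] Z} {x : Z}
    (hξ : galoisLeftInv γ ξ = x ⊗ₜ 1) (η : B ⊗[R] Z) :
    galoisLeftInv γ (ξ * η) = (x ⊗ₜ 1) * galoisLeftInv γ η := by
  have hmul (b : B) (w : Z) :
      galoisLeftInv γ (ξ * (b ⊗ₜ w)) = (1 ⊗ₜ op w) * galoisLeftInv γ ξ * γ b := by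
    clear hξ
    induction ξ using TensorProduct.induction_on with
    | zero => simp
    | tmul b' w' => simp [galoisLeftInv_tmul, ← mul_assoc]
    | add ξ η hξ hη => rw [add_mul, map_add, map_add, hξ, hη, mul_add, add_mul]
  induction η using TensorProduct.induction_on with
  | zero => simp
  | tmul b w => rw [hmul, hξ, galoisLeftInv_tmul, ← mul_assoc]; simp
  | add η η' hη hη' => rw [mul_add, map_add, map_add, hη, hη', mul_add]

lemma galoisLeftInv_apply_coaction [DecidableEq κ]
    (hz : Algebra.adjoin R (Set.range (Function.uncurry z)) = ⊤) (hvz : v * z = 1)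
    {α : Z →ₐ[R] B ⊗[R] Z} (hα : ∀ i j, α (z i j) = ∑ l, a i l ⊗ₜ z l j)
    {γ : B →ₐ[R] Z ⊗[R] Zᵐᵒᵖ} (hγ : ∀ i j, γ (a i j) = ∑ l, z i l ⊗ₜ op (v l j)) (x : Z) :
    galoisLeftInv γ (α x) = x ⊗ₜ 1 := by
  refine apply_algHom_eq_of_adjoin_eq_top (ψ := Algebra.TensorProduct.includeLeft) hz ?_ ?_ ?_ x
  · rintro _ ⟨⟨i, j⟩, rfl⟩
    calc galoisLeftInv γ (α (z i j))
        = ∑ l, ∑ s, z i s ⊗ₜ[R] op (v s l * z l j) := by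
          simp [hα, hγ, galoisLeftInv_tmul, Finset.mul_sum]
      _ = ∑ s, z i s ⊗ₜ[R] op ((v * z) s j) := by
          rw [Finset.sum_comm]
          simp [Matrix.mul_apply, Finset.op_sum, TensorProduct.tmul_sum]
      _ = z i j ⊗ₜ 1 := by
          simp [hvz, Matrix.one_apply, apply_ite op, TensorProduct.tmul_ite]
  · simp [Algebra.TensorProduct.one_def, galoisLeftInv_tmul]
  · intro x y hx hy
    rw [galoisLeftInv_mul_of_eq_tmul_one hx, hy]
    rfl

lemma galoisLeftOp_apply_translation [DecidableEq ι]
    (ha : Algebra.adjoin R (Set.range (Function.uncurry a)) = ⊤) (hzv : z * v = 1)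
    {α : Z →ₐ[R] B ⊗[R] Z} (hα : ∀ i j, α (z i j) = ∑ l, a i l ⊗ₜ z l j)
    {γ : B →ₐ[R] Z ⊗[R] Zᵐᵒᵖ} (hγ : ∀ i j, γ (a i j) = ∑ l, z i l ⊗ₜ op (v l j)) (b : B) :
    galoisLeftOp α (γ b) = b ⊗ₜ 1 := by
  refine apply_algHom_eq_of_adjoin_eq_top (ψ := Algebra.TensorProduct.includeLeft) ha ?_ ?_ ?_ b
  · rintro _ ⟨⟨i, j⟩, rfl⟩
    calc galoisLeftOp α (γ (a i j))
        = ∑ l, ∑ s, a i s ⊗ₜ[R] (z s l * v l j) := by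
          simp [hα, hγ, galoisLeftOp_tmul, Finset.sum_mul]
      _ = ∑ s, a i s ⊗ₜ[R] (z * v) s j := by
          rw [Finset.sum_comm]
          simp [Matrix.mul_apply, TensorProduct.tmul_sum]
      _ = a i j ⊗ₜ 1 := by simp [hzv, Matrix.one_apply, TensorProduct.tmul_ite]
  · simp [Algebra.TensorProduct.one_def, galoisLeftOp_tmul]
  · intro x y hx hy
    rw [galoisLeftOp_mul_of_eq_tmul_one hy, hx]
    rfl

theorem bijective_galoisLeft_of_inverse_matrix [DecidableEq ι] [DecidableEq κ]
    (ha : Algebra.adjoin R (Set.range (Function.uncurry a)) = ⊤)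
    (hz : Algebra.adjoin R (Set.range (Function.uncurry z)) = ⊤)
    (hvz : v * z = 1) (hzv : z * v = 1)
    {α : Z →ₐ[R] B ⊗[R] Z} (hα : ∀ i j, α (z i j) = ∑ l, a i l ⊗ₜ z l j)
    {γ : B →ₐ[R] Z ⊗[R] Zᵐᵒᵖ} (hγ : ∀ i j, γ (a i j) = ∑ l, z i l ⊗ₜ op (v l j)) :
    Function.Bijective (galoisLeft α) := by
  have hleft : galoisLeftInv γ ∘ₗ galoisLeftOp α = LinearMap.id := by
    ext x y
    have := galoisLeftInv_mul_of_eq_tmul_one (galoisLeftInv_apply_coaction hz hvz hα hγ x)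
      (1 ⊗ₜ unop y)
    simpa [galoisLeftOp_tmul, galoisLeftInv_tmul] using this
  have hright : galoisLeftOp α ∘ₗ galoisLeftInv γ = LinearMap.id := by
    ext b w
    have := galoisLeftOp_mul_of_eq_tmul_one (galoisLeftOp_apply_translation ha hzv hα hγ b)
      (1 ⊗ₜ op w)
    simpa [galoisLeftOp_tmul, galoisLeftInv_tmul] using this
  have hbij : Function.Bijective (galoisLeftOp α) :=
    Function.bijective_iff_has_inverse.2
      ⟨galoisLeftInv γ, LinearMap.congr_fun hleft, LinearMap.congr_fun hright⟩
  exact (Function.Bijective.of_comp_iff _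
    (LinearEquiv.lTensor Z (opLinearEquiv R).symm).bijective).1 hbij

/-- The Galois map `κᵣ = (m ⊗ id) ∘ (id ⊗ β)` of a map `β : Z → Z ⊗ B`. -/
def galoisRight (β : Z →ₐ[R] Z ⊗[R] B) : Z ⊗[R] Z →ₗ[R] Z ⊗[R] B :=
  LinearMap.rTensor B (LinearMap.mul' R Z) ∘ₗ (TensorProduct.assoc R Z Z B).symm.toLinearMap ∘ₗ
    LinearMap.lTensor Z β.toLinearMap

/-- The Galois map `κᵣ` of `β : Z → Z ⊗ B`, with the first factor of its domain replaced by
`Zᵐᵒᵖ` so that it is compatible with products. -/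
def galoisRightOp (β : Z →ₐ[R] Z ⊗[R] B) : Zᵐᵒᵖ ⊗[R] Z →ₗ[R] Z ⊗[R] B :=
  galoisRight β ∘ₗ LinearMap.rTensor Z (opLinearEquiv R).symm.toLinearMap

/-- The candidate inverse of the Galois map `κᵣ` determined by `γ : B → Zᵐᵒᵖ ⊗ Z`, the inverse of
`κᵣ` on `1 ⊗ B` (the translation map). -/
def galoisRightInv (γ : B →ₐ[R] Zᵐᵒᵖ ⊗[R] Z) : Z ⊗[R] B →ₗ[R] Zᵐᵒᵖ ⊗[R] Z :=
  TensorProduct.lift <| (LinearMap.mul R (Zᵐᵒᵖ ⊗[R] Z)).flip.compl₁₂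
    (Algebra.TensorProduct.includeLeft.toLinearMap ∘ₗ (opLinearEquiv R).toLinearMap)
    γ.toLinearMap

lemma galoisRight_tmul (β : Z →ₐ[R] Z ⊗[R] B) (x y : Z) :
    galoisRight β (x ⊗ₜ y) = (x ⊗ₜ 1) * β y := by
  simp only [galoisRight, LinearMap.comp_apply, LinearMap.lTensor_tmul, AlgHom.toLinearMap_apply,
    LinearEquiv.coe_coe]
  induction β y using TensorProduct.induction_on with
  | zero => simp
  | tmul w b => simp
  | add ξ η hξ hη => rw [TensorProduct.tmul_add, map_add, map_add, hξ, hη, mul_add]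

lemma galoisRightOp_tmul (β : Z →ₐ[R] Z ⊗[R] B) (x : Zᵐᵒᵖ) (y : Z) :
    galoisRightOp β (x ⊗ₜ y) = (unop x ⊗ₜ 1) * β y :=
  galoisRight_tmul β (unop x) y

lemma galoisRightInv_tmul (γ : B →ₐ[R] Zᵐᵒᵖ ⊗[R] Z) (w : Z) (b : B) :
    galoisRightInv γ (w ⊗ₜ b) = γ b * (op w ⊗ₜ 1) :=
  rfl

lemma galoisRightOp_mul_of_eq_one_tmul {β : Z →ₐ[R] Z ⊗[R] B} {ξ : Zᵐᵒᵖ ⊗[R] Z} {b : B}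
    (hξ : galoisRightOp β ξ = 1 ⊗ₜ b) (η : Zᵐᵒᵖ ⊗[R] Z) :
    galoisRightOp β (ξ * η) = (1 ⊗ₜ b) * galoisRightOp β η := by
  have hmul (x : Zᵐᵒᵖ) (y : Z) :
      galoisRightOp β (ξ * (x ⊗ₜ y)) = (unop x ⊗ₜ 1) * galoisRightOp β ξ * β y := by
    clear hξ
    induction ξ using TensorProduct.induction_on with
    | zero => simp
    | tmul x' y' => simp [galoisRightOp_tmul, ← mul_assoc]
    | add ξ η hξ hη => rw [add_mul, map_add, map_add, hξ, hη, mul_add, add_mul]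
  induction η using TensorProduct.induction_on with
  | zero => simp
  | tmul x y => rw [hmul, hξ, galoisRightOp_tmul, ← mul_assoc]; simp
  | add η η' hη hη' => rw [mul_add, map_add, map_add, hη, hη', mul_add]

lemma galoisRightInv_mul_of_eq_one_tmul {γ : B →ₐ[R] Zᵐᵒᵖ ⊗[R] Z} {η : Z ⊗[R] B} {y : Z}
    (hη : galoisRightInv γ η = 1 ⊗ₜ y) (ξ : Z ⊗[R] B) :
    galoisRightInv γ (ξ * η) = galoisRightInv γ ξ * (1 ⊗ₜ y) := by
  have hmul (w : Z) (b : B) :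
      galoisRightInv γ ((w ⊗ₜ b) * η) = γ b * galoisRightInv γ η * (op w ⊗ₜ 1) := by
    clear hη
    induction η using TensorProduct.induction_on with
    | zero => simp
    | tmul w' b' => simp [galoisRightInv_tmul, mul_assoc]
    | add ξ η hξ hη => rw [mul_add, map_add, map_add, hξ, hη, mul_add, add_mul]
  induction ξ using TensorProduct.induction_on with
  | zero => simp
  | tmul w b => rw [hmul, hη, galoisRightInv_tmul, mul_assoc, mul_assoc]; simp
  | add ξ ξ' hξ hξ' => rw [add_mul, map_add, map_add, hξ, hξ', add_mul]

lemma galoisRightInv_apply_coaction [DecidableEq ι]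
    (hz : Algebra.adjoin R (Set.range (Function.uncurry z)) = ⊤) (hzv : z * v = 1)
    {β : Z →ₐ[R] Z ⊗[R] B} (hβ : ∀ i j, β (z i j) = ∑ l, z i l ⊗ₜ b l j)
    {γ : B →ₐ[R] Zᵐᵒᵖ ⊗[R] Z} (hγ : ∀ i j, γ (b i j) = ∑ l, op (v i l) ⊗ₜ z l j) (x : Z) :
    galoisRightInv γ (β x) = 1 ⊗ₜ x := by
  refine apply_algHom_eq_of_adjoin_eq_top (ψ := Algebra.TensorProduct.includeRight) hz ?_ ?_ ?_ x
  · rintro _ ⟨⟨i, j⟩, rfl⟩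
    calc galoisRightInv γ (β (z i j))
        = ∑ l, ∑ s, op (z i l * v l s) ⊗ₜ[R] z s j := by
          simp [hβ, hγ, galoisRightInv_tmul, Finset.sum_mul]
      _ = ∑ s, op ((z * v) i s) ⊗ₜ[R] z s j := by
          rw [Finset.sum_comm]
          simp [Matrix.mul_apply, Finset.op_sum, TensorProduct.sum_tmul]
      _ = 1 ⊗ₜ z i j := by
          simp [hzv, Matrix.one_apply, apply_ite op, TensorProduct.ite_tmul]
  · simp [Algebra.TensorProduct.one_def, galoisRightInv_tmul]
  · intro x y hx hy
    rw [galoisRightInv_mul_of_eq_one_tmul hy, hx]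
    rfl

lemma galoisRightOp_apply_translation [DecidableEq κ]
    (hb : Algebra.adjoin R (Set.range (Function.uncurry b)) = ⊤) (hvz : v * z = 1)
    {β : Z →ₐ[R] Z ⊗[R] B} (hβ : ∀ i j, β (z i j) = ∑ l, z i l ⊗ₜ b l j)
    {γ : B →ₐ[R] Zᵐᵒᵖ ⊗[R] Z} (hγ : ∀ i j, γ (b i j) = ∑ l, op (v i l) ⊗ₜ z l j) (x : B) :
    galoisRightOp β (γ x) = 1 ⊗ₜ x := by
  refine apply_algHom_eq_of_adjoin_eq_top (ψ := Algebra.TensorProduct.includeRight) hb ?_ ?_ ?_ x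
  · rintro _ ⟨⟨i, j⟩, rfl⟩
    calc galoisRightOp β (γ (b i j))
        = ∑ l, ∑ s, (v i l * z l s) ⊗ₜ[R] b s j := by
          simp [hβ, hγ, galoisRightOp_tmul, Finset.mul_sum]
      _ = ∑ s, (v * z) i s ⊗ₜ[R] b s j := by
          rw [Finset.sum_comm]
          simp [Matrix.mul_apply, TensorProduct.sum_tmul]
      _ = 1 ⊗ₜ b i j := by simp [hvz, Matrix.one_apply, TensorProduct.ite_tmul]
  · simp [Algebra.TensorProduct.one_def, galoisRightOp_tmul]
  · intro x y hx hy
    rw [galoisRightOp_mul_of_eq_one_tmul hx, hy]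
    rfl

theorem bijective_galoisRight_of_inverse_matrix [DecidableEq ι] [DecidableEq κ]
    (hb : Algebra.adjoin R (Set.range (Function.uncurry b)) = ⊤)
    (hz : Algebra.adjoin R (Set.range (Function.uncurry z)) = ⊤)
    (hvz : v * z = 1) (hzv : z * v = 1)
    {β : Z →ₐ[R] Z ⊗[R] B} (hβ : ∀ i j, β (z i j) = ∑ l, z i l ⊗ₜ b l j)
    {γ : B →ₐ[R] Zᵐᵒᵖ ⊗[R] Z} (hγ : ∀ i j, γ (b i j) = ∑ l, op (v i l) ⊗ₜ z l j) :
    Function.Bijective (galoisRight β) := by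
  have hleft : galoisRightInv γ ∘ₗ galoisRightOp β = LinearMap.id := by
    ext x y
    have := galoisRightInv_mul_of_eq_one_tmul (galoisRightInv_apply_coaction hz hzv hβ hγ y)
      (unop x ⊗ₜ 1)
    simpa [galoisRightOp_tmul, galoisRightInv_tmul] using this
  have hright : galoisRightOp β ∘ₗ galoisRightInv γ = LinearMap.id := by
    ext w x
    have := galoisRightOp_mul_of_eq_one_tmul (galoisRightOp_apply_translation hb hvz hβ hγ x)
      (op w ⊗ₜ 1)
    simpa [galoisRightOp_tmul, galoisRightInv_tmul] using this
  have hbij : Function.Bijective (galoisRightOp β) :=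
    Function.bijective_iff_has_inverse.2
      ⟨galoisRightInv γ, LinearMap.congr_fun hleft, LinearMap.congr_fun hright⟩
  exact (Function.Bijective.of_comp_iff _
    (LinearEquiv.rTensor Z (opLinearEquiv R).symm).bijective).1 hbij

end GaloisMaps

namespace BB

variable {k} {m n : ℕ} {E : Matrix (Fin m) (Fin m) k} {F : Matrix (Fin n) (Fin n) k}

theorem bijective_galoisLeft (hE : IsUnit E.det) (hF : IsUnit F.det)
    {α : BB k E F →ₐ[k] BB k E E ⊗[k] BB k E F}
    (hα : ∀ i j, α (ZMat k E F i j) = ∑ l, ZMat k E E i l ⊗ₜ[k] ZMat k E F l j) :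
    Function.Bijective (galoisLeft α) := by
  let γ : BB k E E →ₐ[k] BB k E F ⊗[k] (BB k E F)ᵐᵒᵖ :=
    (Algebra.TensorProduct.map (AlgHom.id k _) (antipode hE hF)).comp (comul hF)
  have hγ (i j) : γ (ZMat k E E i j) =
      ∑ l, ZMat k E F i l ⊗ₜ MulOpposite.op (bInverse E F (ZMat k E F) l j) := by
    simp [γ, comul_zMat, antipode_zMat]
  exact bijective_galoisLeft_of_inverse_matrix adjoin_range_zMat adjoin_range_zMat
    satisfiesBRel_zMat.bInverse_mul satisfiesBRel_zMat.mul_bInverse hα hγ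

theorem bijective_galoisRight (hE : IsUnit E.det) (hF : IsUnit F.det)
    {β : BB k E F →ₐ[k] BB k E F ⊗[k] BB k F F}
    (hβ : ∀ i j, β (ZMat k E F i j) = ∑ l, ZMat k E F i l ⊗ₜ[k] ZMat k F F l j) :
    Function.Bijective (galoisRight β) := by
  let γ : BB k F F →ₐ[k] (BB k E F)ᵐᵒᵖ ⊗[k] BB k E F :=
    (Algebra.TensorProduct.map (antipode hE hF) (AlgHom.id k _)).comp (comul hE)
  have hγ (i j) : γ (ZMat k F F i j) =
      ∑ l, MulOpposite.op (bInverse E F (ZMat k E F) i l) ⊗ₜ ZMat k E F l j := by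
    simp [γ, comul_zMat, antipode_zMat]
  exact bijective_galoisRight_of_inverse_matrix adjoin_range_zMat adjoin_range_zMat
    satisfiesBRel_zMat.bInverse_mul satisfiesBRel_zMat.mul_bInverse hβ hγ

end BB

section Contraction

variable {R A ι : Type*} [CommRing R] [Ring A] [Algebra R A] [Fintype ι]

/-- The contraction `∑ i j, G i j • (x i * y j)` of two families of elements of an algebra against
a matrix of scalars, as a bilinear map. -/
def contract (G : Matrix ι ι R) : (ι → A) →ₗ[R] (ι → A) →ₗ[R] A :=
  ∑ i, ∑ j, G i j • (LinearMap.mul R A).compl₁₂ (LinearMap.proj i) (LinearMap.proj j)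

variable {G : Matrix ι ι R}

lemma contract_apply (x y : ι → A) : contract G x y = ∑ i, ∑ j, G i j • (x i * y j) := by
  simp [contract, LinearMap.sum_apply]

lemma map_contract {B : Type*} [Ring B] [Algebra R B] (f : A →ₐ[R] B) (x y : ι → A) :
    f (contract G x y) = contract G (fun i => f (x i)) fun i => f (y i) := by
  simp [contract_apply]

lemma contract_mul (x y : ι → A) (a : A) :
    contract G x y * a = contract G x fun j => y j * a := by
  simp [contract_apply, Finset.sum_mul, mul_assoc]

lemma mul_contract (x y : ι → A) (a : A) :
    a * contract G x y = contract G (fun i => a * x i) y := by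
  simp [contract_apply, Finset.mul_sum, mul_assoc]

variable [DecidableEq ι] {F : Matrix ι ι R}

lemma contract_column_of_mul_eq_one (hGF : G * F = 1) (x : ι → A) (l : ι) :
    contract G x (fun j => F j l • (1 : A)) = x l := by
  calc contract G x (fun j => F j l • (1 : A)) = ∑ i, (G * F) i l • x i := by
        simp [contract_apply, Matrix.mul_apply, Finset.sum_smul, mul_smul]
    _ = x l := by simp [hGF, Matrix.one_apply, ite_smul]

lemma contract_row_of_mul_eq_one (hFG : F * G = 1) (y : ι → A) (l : ι) :
    contract G (fun i => F l i • (1 : A)) y = y l := by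
  calc contract G (fun i => F l i • (1 : A)) y = ∑ j, (F * G) l j • y j := by
        rw [contract_apply, Finset.sum_comm]
        simp [Matrix.mul_apply, Finset.sum_smul, mul_smul, smul_comm (F l _)]
    _ = y l := by simp [hFG, Matrix.one_apply, ite_smul]

end Contraction

section ExchangeRelation

variable {R A ι : Type*} [CommRing R] [Ring A] [Algebra R A] [Fintype ι]
  {F G : Matrix ι ι R} {q : R} {x y : ι → A}

/-- The relation `y i * x j = q • (x i * y j) - (q * F i j) • 1` between two families, which says
that the matrix with rows `x` and `y` satisfies `ᵀz * E_q * z = F`. -/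
def ExchangeRelation (F : Matrix ι ι R) (q : R) (x y : ι → A) : Prop :=
  ∀ i j, y i * x j = q • (x i * y j) - (q * F i j) • 1

namespace ExchangeRelation

lemma contract_yx_sub_one (h : ExchangeRelation F q x y)
    (htr : q ^ 2 + (F * Gᵀ).trace * q + 1 = 0) :
    contract G y x - 1 = q • (contract G x y + q • 1) := by
  have htrace : ∑ i, ∑ j, G i j * (q * F i j) = -(q ^ 2 + 1) := by
    have : ∑ i, ∑ j, G i j * (q * F i j) = (F * Gᵀ).trace * q := by
      simp only [Matrix.trace, Matrix.diag_apply, Matrix.mul_apply, Matrix.transpose_apply,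
        Finset.sum_mul]
      exact Finset.sum_congr rfl fun i _ => Finset.sum_congr rfl fun j _ => by ring
    linear_combination this + htr
  have hyx : contract G y x = q • contract G x y + (q ^ 2 + 1) • (1 : A) :=
    calc contract G y x
        = q • contract G x y - (∑ i, ∑ j, G i j * (q * F i j)) • (1 : A) := by
          simp only [contract_apply, h _ _, smul_sub, Finset.sum_sub_distrib, Finset.smul_sum,
            Finset.sum_smul, smul_smul, mul_comm q]
      _ = q • contract G x y + (q ^ 2 + 1) • (1 : A) := by rw [htrace]; module
  rw [hyx]
  module

variable [DecidableEq ι]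

lemma contract_mul_x (h : ExchangeRelation F q x y) (hGF : G * F = 1) (u : ι → A) (l : ι) :
    contract G u y * x l = q • (contract G u x * y l) - q • u l :=
  calc contract G u y * x l
      = contract G u (q • (fun j => x j * y l) - q • fun j => F j l • (1 : A)) := by
        rw [contract_mul]
        congr 1
        funext j
        simp [h j l, mul_smul]
    _ = q • (contract G u x * y l) - q • u l := by
        rw [map_sub, map_smul, map_smul, contract_column_of_mul_eq_one hGF, contract_mul]

lemma y_mul_contract (h : ExchangeRelation F q x y) (hFG : F * G = 1) (u : ι → A) (l : ι) :
    y l * contract G x u = q • (x l * contract G y u) - q • u l :=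
  calc y l * contract G x u
      = contract G (q • (fun i => x l * y i) - q • fun i => F l i • (1 : A)) u := by
        rw [mul_contract]
        congr 2
        funext i
        simp [h l i, mul_smul]
    _ = q • (x l * contract G y u) - q • u l := by
        rw [map_sub, map_smul, map_smul, LinearMap.sub_apply, LinearMap.smul_apply,
          LinearMap.smul_apply, contract_row_of_mul_eq_one hFG, mul_contract]

end ExchangeRelation

end ExchangeRelation

section VacuumModule

variable {R ι : Type*} [CommRing R]

lemma mem_of_mem_ideal_span_of_ι_mul_mem {N : Submodule R (FreeAlgebra R ι)}
    {S : Set (FreeAlgebra R ι)} (hS : S ⊆ N) (hι : ∀ l, ∀ w ∈ N, FreeAlgebra.ι R l * w ∈ N)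
    {w : FreeAlgebra R ι} (hw : w ∈ Ideal.span S) : w ∈ N := by
  have hmul (a : FreeAlgebra R ι) : ∀ w ∈ N, a * w ∈ N := by
    induction a using FreeAlgebra.induction with
    | grade0 r => exact fun w hw => Algebra.smul_def r w ▸ N.smul_mem r hw
    | grade1 l => exact hι l
    | mul a b ha hb => exact fun w hw => mul_assoc a b w ▸ ha _ (hb w hw)
    | add a b ha hb => exact fun w hw => add_mul a b w ▸ N.add_mem (ha w hw) (hb w hw)
  induction hw using Submodule.span_induction with
  | mem w hw => exact hS hw
  | zero => exact N.zero_mem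
  | add v w _ _ hv hw => exact N.add_mem hv hw
  | smul a w _ hw => exact hmul a w hw

/-- Left multiplication by the `i`-th generator of the free algebra. -/
def raising (i : ι) : Module.End R (FreeAlgebra R ι) :=
  Algebra.lmul R (FreeAlgebra R ι) (FreeAlgebra.ι R i)

lemma raising_apply (i : ι) (w : FreeAlgebra R ι) : raising i w = FreeAlgebra.ι R i * w := rfl

lemma apply_mem_of_apply_raising_mem {N : Submodule R (FreeAlgebra R ι)}
    {Φ : Module.End R (FreeAlgebra R ι)} (h1 : Φ 1 ∈ N) (hΦ : ∀ l w, Φ (raising l w) ∈ N)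
    (w : FreeAlgebra R ι) : Φ w ∈ N := by
  refine mem_of_mem_ideal_span_of_ι_mul_mem (N := N.comap Φ) (S := {1}) ?_ (fun l w _ => hΦ l w) ?_
  · simpa using h1
  · simp [Ideal.span_singleton_one]

/-- The operator on `(v, w)` which multiplies `w` by the `j`-th generator of the free algebra and
updates `v` by the exchange relation, `v i` standing for the value on `w` of the `i`-th lowering
operator. -/
def loweringStep (F : Matrix ι ι R) (q : R) (j : ι) :
    Module.End R ((ι → FreeAlgebra R ι) × FreeAlgebra R ι) :=
  (LinearMap.pi fun i => q • (raising i ∘ₗ LinearMap.proj j ∘ₗ LinearMap.fst R _ _) -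
    (q * F i j) • LinearMap.snd R _ _).prod (raising j ∘ₗ LinearMap.snd R _ _)

/-- The operators on the free algebra defined by the exchange relation with the raising operators
and the values `c i` at `1`. -/
def lowering (F : Matrix ι ι R) (c : ι → R) (q : R) (i : ι) : Module.End R (FreeAlgebra R ι) :=
  LinearMap.proj i ∘ₗ LinearMap.fst R _ _ ∘ₗ
    LinearMap.applyₗ (fun i => algebraMap R (FreeAlgebra R ι) (c i), 1) ∘ₗ
      (FreeAlgebra.lift R (loweringStep F q)).toLinearMap

lemma lowering_one (F : Matrix ι ι R) (c : ι → R) (q : R) (i : ι) :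
    lowering F c q i 1 = algebraMap R _ (c i) := by
  simp [lowering]

lemma snd_lift_loweringStep (F : Matrix ι ι R) (q : R) (w : FreeAlgebra R ι)
    (p : (ι → FreeAlgebra R ι) × FreeAlgebra R ι) :
    (FreeAlgebra.lift R (loweringStep F q) w p).2 = w * p.2 := by
  induction w using FreeAlgebra.induction generalizing p with
  | grade0 r => simp [Algebra.smul_def]
  | grade1 j => simp [loweringStep, raising_apply]
  | mul a b ha hb => simp [ha, hb, mul_assoc]
  | add a b ha hb => simp [ha, hb, add_mul]

lemma exchangeRelation_raising_lowering (F : Matrix ι ι R) (c : ι → R) (q : R) :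
    ExchangeRelation F q raising (lowering F c q) := by
  intro i j
  ext w
  simp [lowering, raising_apply, loweringStep, snd_lift_loweringStep]

/-- The action of the `i`-th generator on the (dual) point module of the sequence of points `d`. -/
def weightedShift (d : ℕ → ι → R) (i : ι) : Module.End R (ℕ → R) :=
  LinearMap.pi fun m => d m i • LinearMap.proj (m + 1)

lemma weightedShift_apply (d : ℕ → ι → R) (i : ι) (s : ℕ → R) (m : ℕ) :
    weightedShift d i s m = d m i * s (m + 1) := rfl

variable [Fintype ι]

lemma contract_raising_raising (G : Matrix ι ι R) (w : FreeAlgebra R ι) :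
    contract G raising raising w = contract G (FreeAlgebra.ι R) (FreeAlgebra.ι R) * w :=
  (DFunLike.congr_fun (map_contract (Algebra.lmul R (FreeAlgebra R ι)) _ _) w).symm

/-- The left ideal generated by `r * w` for all `w`, where `r` is the contraction of the generators
with themselves, and by `s + q`, where `s` is the contraction of the generators with `c`. The
raising and lowering operators act on the quotient by it and satisfy the relations of `B(E_q,F)`
there. -/
def vacuumIdeal (G : Matrix ι ι R) (c : ι → R) (q : R) : Ideal (FreeAlgebra R ι) :=
  Ideal.span (Set.range (contract G (FreeAlgebra.ι R) (FreeAlgebra.ι R) * ·) ∪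
    {contract G (FreeAlgebra.ι R) (fun i => algebraMap R _ (c i)) + algebraMap R _ q})

section Membership

variable {F G : Matrix ι ι R} {c : ι → R} {q : R}

lemma contract_raising_raising_mem (w : FreeAlgebra R ι) :
    contract G raising raising w ∈ vacuumIdeal G c q :=
  contract_raising_raising G w ▸ Ideal.subset_span (Or.inl ⟨w, rfl⟩)

lemma contract_raising_lowering_one :
    (contract G raising (lowering F c q) + q • 1) 1 =
      contract G (FreeAlgebra.ι R) (fun i => algebraMap R _ (c i)) + algebraMap R _ q := by
  simp [contract_apply, LinearMap.sum_apply, raising_apply, lowering_one, Algebra.smul_def]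

lemma contract_lowering_lowering_one (hc : contract G c c = 0) :
    contract G (lowering F c q) (lowering F c q) 1 = 0 :=
  calc contract G (lowering F c q) (lowering F c q) 1
      = contract G c c • 1 := by
        simp only [contract_apply, LinearMap.sum_apply, LinearMap.smul_apply, Module.End.mul_apply,
          lowering_one, Algebra.algebraMap_eq_smul_one, map_smul, Finset.sum_smul, smul_smul,
          smul_eq_mul, mul_comm]
    _ = 0 := by rw [hc, zero_smul]

variable [DecidableEq ι]

lemma contract_raising_lowering_mem (hGF : G * F = 1) (w : FreeAlgebra R ι) :
    (contract G raising (lowering F c q) + q • 1) w ∈ vacuumIdeal G c q := by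
  refine apply_mem_of_apply_raising_mem (N := (vacuumIdeal G c q).restrictScalars R) ?_ ?_ w
  · rw [contract_raising_lowering_one]
    exact Ideal.subset_span (Or.inr rfl)
  · intro l w
    have hmul : (contract G raising (lowering F c q) + q • 1) * raising l =
        q • (contract G raising raising * lowering F c q l) := by
      rw [add_mul, (exchangeRelation_raising_lowering F c q).contract_mul_x hGF, smul_one_mul,
        sub_add_cancel]
    rw [← Module.End.mul_apply, hmul]
    exact Submodule.smul_mem _ q (contract_raising_raising_mem _)

lemma contract_lowering_raising_mem (hGF : G * F = 1)
    (htr : q ^ 2 + (F * Gᵀ).trace * q + 1 = 0) (w : FreeAlgebra R ι) :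
    (contract G (lowering F c q) raising - 1) w ∈ vacuumIdeal G c q := by
  rw [(exchangeRelation_raising_lowering F c q).contract_yx_sub_one htr]
  exact Submodule.smul_of_tower_mem _ q (contract_raising_lowering_mem hGF w)

lemma contract_lowering_lowering_mem (hGF : G * F = 1)
    (htr : q ^ 2 + (F * Gᵀ).trace * q + 1 = 0) (hc : contract G c c = 0) (w : FreeAlgebra R ι) :
    contract G (lowering F c q) (lowering F c q) w ∈ vacuumIdeal G c q := by
  refine apply_mem_of_apply_raising_mem (N := (vacuumIdeal G c q).restrictScalars R) ?_ ?_ w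
  · rw [contract_lowering_lowering_one hc]
    exact Submodule.zero_mem _
  · intro l w
    have hmul : contract G (lowering F c q) (lowering F c q) * raising l =
        q • ((contract G (lowering F c q) raising - 1) * lowering F c q l) := by
      rw [(exchangeRelation_raising_lowering F c q).contract_mul_x hGF, sub_mul, one_mul, smul_sub]
    rw [← Module.End.mul_apply, hmul]
    exact Submodule.smul_mem _ q (contract_lowering_raising_mem hGF htr _)

lemma lowering_mem (hFG : F * G = 1) (hGF : G * F = 1)
    (htr : q ^ 2 + (F * Gᵀ).trace * q + 1 = 0) (hc : contract G c c = 0) {w : FreeAlgebra R ι}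
    (hw : w ∈ vacuumIdeal G c q) (l : ι) : lowering F c q l w ∈ vacuumIdeal G c q := by
  have hexch := exchangeRelation_raising_lowering F c q
  let N := (vacuumIdeal G c q).restrictScalars R
  suffices hN : w ∈ N ⊓ ⨅ l, N.comap (lowering F c q l) from
    (Submodule.mem_iInf _).mp hN.2 l
  refine mem_of_mem_ideal_span_of_ι_mul_mem (fun g hg => ?_) (fun j w hw => ?_) hw
  · refine ⟨Ideal.subset_span hg, (Submodule.mem_iInf _).mpr fun l => ?_⟩
    obtain ⟨w, rfl⟩ | rfl := hg
    · have hmul : lowering F c q l * contract G raising raising =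
          q • (raising l * (contract G (lowering F c q) raising - 1)) := by
        rw [hexch.y_mul_contract hFG, mul_sub, mul_one, smul_sub]
      change lowering F c q l (_ * w) ∈ N
      rw [← contract_raising_raising, ← Module.End.mul_apply, hmul]
      exact N.smul_mem q (Ideal.mul_mem_left _ _ (contract_lowering_raising_mem hGF htr w))
    · have hmul : lowering F c q l * (contract G raising (lowering F c q) + q • 1) =
          q • (raising l * contract G (lowering F c q) (lowering F c q)) := by
        rw [mul_add, hexch.y_mul_contract hFG, mul_smul_one, sub_add_cancel]
      rw [Submodule.mem_comap, ← contract_raising_lowering_one (F := F), ← Module.End.mul_apply,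
        hmul, LinearMap.smul_apply, Module.End.mul_apply, contract_lowering_lowering_one hc,
        map_zero, smul_zero]
      exact N.zero_mem
  · refine ⟨Ideal.mul_mem_left _ _ hw.1, (Submodule.mem_iInf _).mpr fun l => ?_⟩
    have hjw : lowering F c q j w ∈ N := (Submodule.mem_iInf _).mp hw.2 j
    rw [Submodule.mem_comap, ← raising_apply, ← Module.End.mul_apply, hexch l j]
    exact N.sub_mem (N.smul_mem q (Ideal.mul_mem_left _ _ hjw)) (N.smul_mem _ hw.1)

end Membership

section Proper

variable {G : Matrix ι ι R} {c e : ι → R}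

/-- The points `d m` with `contract G (d m) c = 1` and `contract G (d m) (d (m + 1)) = 0`, obtained
from `e` by correcting with multiples of the isotropic vector `c`. -/
def pointSeq (G : Matrix ι ι R) (c e : ι → R) : ℕ → ι → R
  | 0 => e
  | m + 1 => e - contract G (pointSeq G c e m) e • c

lemma contract_pointSeq_left (hc : contract G c c = 0) (he : contract G e c = 1) (m : ℕ) :
    contract G (pointSeq G c e m) c = 1 := by
  cases m <;> simp [pointSeq, hc, he]

lemma contract_pointSeq_succ (hc : contract G c c = 0) (he : contract G e c = 1) (m : ℕ) :
    contract G (pointSeq G c e m) (pointSeq G c e (m + 1)) = 0 := by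
  simp [pointSeq, contract_pointSeq_left hc he m]

lemma contract_weightedShift_weightedShift (d : ℕ → ι → R) (s : ℕ → R) (m : ℕ) :
    contract G (weightedShift d) (weightedShift d) s m =
      contract G (d m) (d (m + 1)) * s (m + 2) := by
  simp [contract_apply, LinearMap.sum_apply, weightedShift_apply, Finset.sum_mul, mul_assoc]

lemma contract_weightedShift_algebraMap (d : ℕ → ι → R) (s : ℕ → R) (m : ℕ) :
    contract G (weightedShift d) (fun i => algebraMap R _ (c i)) s m =
      contract G (d m) c * s (m + 1) := by
  simp [contract_apply, LinearMap.sum_apply, weightedShift_apply, Finset.sum_mul, mul_assoc,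
    mul_left_comm (c _)]

lemma one_notMem_vacuumIdeal [Nontrivial R] (q : R) (hc : contract G c c = 0)
    (he : contract G e c = 1) : (1 : FreeAlgebra R ι) ∉ vacuumIdeal G c q := by
  let ρ := FreeAlgebra.lift R (weightedShift (pointSeq G c e))
  let v : ℕ → R := fun m => (-q) ^ m
  have hρι (i : ι) : ρ (FreeAlgebra.ι R i) = weightedShift (pointSeq G c e) i :=
    FreeAlgebra.lift_ι_apply _ i
  have hquadratic : ρ (contract G (FreeAlgebra.ι R) (FreeAlgebra.ι R)) = 0 := by
    ext s m
    simp only [map_contract, hρι]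
    simp [contract_weightedShift_weightedShift, contract_pointSeq_succ hc he]
  have hlinear : ρ (contract G (FreeAlgebra.ι R) (fun i => algebraMap R _ (c i)) +
      algebraMap R _ q) v = 0 := by
    ext m
    simp only [map_add, map_contract, hρι, AlgHom.commutes]
    simp [contract_weightedShift_algebraMap, contract_pointSeq_left hc he, v, pow_succ', mul_comm]
  have hker : ∀ w ∈ vacuumIdeal G c q, ρ w v = 0 := fun w hw => by
    refine mem_of_mem_ideal_span_of_ι_mul_mem
      (N := LinearMap.ker (LinearMap.applyₗ v ∘ₗ ρ.toLinearMap)) ?_ (fun l w hw => ?_) hw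
    · rintro _ (⟨w, rfl⟩ | rfl)
      · simp [hquadratic]
      · exact hlinear
    · have hw' : ρ w v = 0 := hw
      simp [hw']
  intro h1
  simpa [v] using congrFun (hker 1 h1) 0

end Proper

end VacuumModule

section IsotropicVectors

variable {L ι : Type*} [Field L] [Fintype ι]

lemma contract_eq_dotProduct_mulVec {R : Type*} [CommRing R] (G : Matrix ι ι R) (c d : ι → R) :
    contract G c d = c ⬝ᵥ G *ᵥ d := by
  simp [contract_apply, dotProduct, Matrix.mulVec, Finset.mul_sum, mul_left_comm]

lemma exists_ne_zero_contract_self_eq_zero [IsAlgClosed L] [Nontrivial ι] (G : Matrix ι ι L) :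
    ∃ c : ι → L, c ≠ 0 ∧ contract G c c = 0 := by
  classical
  obtain ⟨i, j, hij⟩ := exists_pair_ne ι
  by_cases hii : G i i = 0
  · exact ⟨Pi.single i 1, by simp, by simp [contract_eq_dotProduct_mulVec, hii]⟩
  · obtain ⟨s, hs⟩ := IsAlgClosed.exists_root
      (Polynomial.C (G i i) * Polynomial.X ^ 2 + Polynomial.C (G i j + G j i) * Polynomial.X +
        Polynomial.C (G j j)) (by rw [Polynomial.degree_quadratic hii]; decide)
    have hroot : G i i * s ^ 2 + (G i j + G j i) * s + G j j = 0 := by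
      simpa [Polynomial.IsRoot] using hs
    refine ⟨Pi.single i s + Pi.single j 1, fun h0 => ?_, ?_⟩
    · simpa [hij.symm] using congrFun h0 j
    · simp only [contract_eq_dotProduct_mulVec, Matrix.mulVec_add, add_dotProduct, dotProduct_add,
        single_dotProduct, Matrix.mulVec_single, Pi.smul_apply, MulOpposite.smul_eq_mul_unop,
        MulOpposite.unop_op, Matrix.col_apply]
      linear_combination hroot

lemma exists_contract_eq_one [DecidableEq ι] {G : Matrix ι ι L} (hG : IsUnit G.det) {c : ι → L}
    (hc : c ≠ 0) : ∃ e : ι → L, contract G e c = 1 := by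
  have hGc : G *ᵥ c ≠ 0 := fun h =>
    hc (Matrix.mulVec_injective_of_isUnit ((Matrix.isUnit_iff_isUnit_det G).mpr hG)
      (h.trans (Matrix.mulVec_zero G).symm))
  obtain ⟨i, hi⟩ := Function.ne_iff.mp hGc
  exact ⟨Pi.single i ((G *ᵥ c) i)⁻¹, by
    rw [contract_eq_dotProduct_mulVec, single_dotProduct, inv_mul_cancel₀ hi]⟩

end IsotropicVectors

section QuotientRepresentation

variable {R M ι : Type*} [CommRing R] [AddCommGroup M] [Module R M] {N : Submodule R M}
  {x y : ι → Module.End R M}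

lemma ExchangeRelation.mapQ {F : Matrix ι ι R} {q : R} (h : ExchangeRelation F q x y)
    (hx : ∀ i, N ≤ N.comap (x i)) (hy : ∀ i, N ≤ N.comap (y i)) :
    ExchangeRelation F q (fun i => N.mapQ N (x i) (hx i)) (fun i => N.mapQ N (y i) (hy i)) :=
  fun i j => Submodule.linearMap_qext _ <| LinearMap.ext fun w =>
    congrArg N.mkQ (DFunLike.congr_fun (h i j) w)

lemma contract_mapQ [Fintype ι] {G : Matrix ι ι R} {r : R} (hx : ∀ i, N ≤ N.comap (x i))
    (hy : ∀ i, N ≤ N.comap (y i)) (h : ∀ w, (contract G x y - r • 1) w ∈ N) :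
    contract G (fun i => N.mapQ N (x i) (hx i)) (fun i => N.mapQ N (y i) (hy i)) = r • 1 := by
  refine Submodule.linearMap_qext _ (LinearMap.ext fun w => ?_)
  have hmkQ : contract G (fun i => N.mapQ N (x i) (hx i)) (fun i => N.mapQ N (y i) (hy i))
      (N.mkQ w) = N.mkQ (contract G x y w) := by
    simp [contract_apply, LinearMap.sum_apply]
  have hw : N.mkQ (contract G x y w) = N.mkQ (r • w) := (Submodule.Quotient.eq N).mpr (h w)
  rw [LinearMap.comp_apply, hmkQ, hw]
  rfl

end QuotientRepresentation

section Eqm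

variable {k} {n : ℕ} {q : k}

lemma isUnit_det_Eqm (hq : q ≠ 0) : IsUnit (Eqm k q).det := by
  simp [Eqm, Matrix.det_fin_two, hq]

lemma inv_Eqm (hq : q ≠ 0) : (Eqm k q)⁻¹ = !![0, -q; 1, 0] := by
  refine Matrix.inv_eq_left_inv ?_
  simp [Eqm, Matrix.one_fin_two, hq]

lemma map_Eqm {L : Type} [Field L] (φ : k →+* L) (q : k) : (Eqm k q).map φ = Eqm L (φ q) := by
  ext i j
  fin_cases i <;> fin_cases j <;> simp [Eqm]

lemma mul_liftMat_mul_transpose_apply {A : Type} [Ring A] [Algebra k A] {m : ℕ}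
    (X : Matrix (Fin m) (Fin n) A) (G : Matrix (Fin n) (Fin n) k) (a b : Fin m) :
    (X * liftMat k (A := A) G * Xᵀ : Matrix _ _ A) a b = contract G (X a) (X b) := by
  simp only [Matrix.mul_apply, Finset.sum_mul, contract_apply]
  rw [Finset.sum_comm]
  simp [liftMat, Algebra.algebraMap_eq_smul_one]

lemma SatisfiesBRel.of_exchangeRelation {A : Type} [Ring A] [Algebra k A] (hq : q ≠ 0)
    {F : Matrix (Fin n) (Fin n) k} (hF : IsUnit F.det) {x y : Fin n → A}
    (hexch : ExchangeRelation F q x y) (hxx : contract F⁻¹ x x = 0)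
    (hxy : contract F⁻¹ x y = (-q) • 1) (hyx : contract F⁻¹ y x = 1)
    (hyy : contract F⁻¹ y y = 0) : SatisfiesBRel (Eqm k q) F (Matrix.of ![x, y]) := by
  refine .of_bilin (isUnit_det_Eqm hq) hF ?_ ?_
  · ext i j
    have hF' : F i j • (1 : A) = x i * y j - q⁻¹ • (y i * x j) := by
      rw [hexch i j, smul_sub, smul_smul, smul_smul, inv_mul_cancel₀ hq,
        inv_mul_cancel_left₀ hq, one_smul, sub_sub_cancel]
    simp [Matrix.mul_apply, Fin.sum_univ_two, liftMat, Algebra.algebraMap_eq_smul_one, hF', Eqm,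
      sub_eq_neg_add]
  · rw [inv_Eqm hq]
    ext a b
    rw [mul_liftMat_mul_transpose_apply]
    change contract F⁻¹ (![x, y] a) (![x, y] b) = _
    fin_cases a <;> fin_cases b <;>
      simp [hxx, hxy, hyx, hyy, liftMat, Algebra.algebraMap_eq_smul_one]

lemma exists_satisfiesBRel_Eqm_end_quotient (hq : q ≠ 0) {F : Matrix (Fin n) (Fin n) k}
    (hF : IsUnit F.det) (htr : q ^ 2 + (F * F⁻¹ᵀ).trace * q + 1 = 0) {c : Fin n → k}
    (hc : contract F⁻¹ c c = 0) :
    ∃ X : Matrix (Fin 2) (Fin n)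
        (Module.End k (FreeAlgebra k (Fin n) ⧸ (vacuumIdeal F⁻¹ c q).restrictScalars k)),
      SatisfiesBRel (Eqm k q) F X := by
  have hGF := Matrix.nonsing_inv_mul F hF
  have hFG := Matrix.mul_nonsing_inv F hF
  let N := (vacuumIdeal F⁻¹ c q).restrictScalars k
  have hx (i : Fin n) : N ≤ N.comap (raising i) := fun w hw => Ideal.mul_mem_left _ _ hw
  have hy (i : Fin n) : N ≤ N.comap (lowering F c q i) := fun w hw =>
    lowering_mem hFG hGF htr hc hw i
  refine ⟨_, .of_exchangeRelation hq hF
    ((exchangeRelation_raising_lowering F c q).mapQ hx hy) ?_ ?_ ?_ ?_⟩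
  · simpa using contract_mapQ (r := 0) hx hx fun w => by
      simpa [N] using contract_raising_raising_mem w
  · exact contract_mapQ hx hy fun w => by simpa [N] using contract_raising_lowering_mem hGF w
  · simpa using contract_mapQ (r := 1) hy hx fun w => by
      simpa [N] using contract_lowering_raising_mem hGF htr w
  · simpa using contract_mapQ (r := 0) hy hy fun w => by
      simpa [N] using contract_lowering_lowering_mem hGF htr hc w

namespace BB

lemma nontrivial_Eqm_of_isAlgClosed [IsAlgClosed k] (hn : 2 ≤ n) (hq : q ≠ 0)
    {F : Matrix (Fin n) (Fin n) k} (hF : IsUnit F.det)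
    (htr : q ^ 2 + (F * F⁻¹ᵀ).trace * q + 1 = 0) : Nontrivial (BB k (Eqm k q) F) := by
  have : Nontrivial (Fin n) := Fin.nontrivial_iff_two_le.mpr hn
  obtain ⟨c, hc0, hc⟩ := exists_ne_zero_contract_self_eq_zero F⁻¹
  obtain ⟨e, he⟩ := exists_contract_eq_one (F.isUnit_nonsing_inv_det hF) hc0
  obtain ⟨X, hX⟩ := exists_satisfiesBRel_Eqm_end_quotient hq hF htr hc
  have hproper : (vacuumIdeal F⁻¹ c q).restrictScalars k ≠ ⊤ := fun htop =>
    one_notMem_vacuumIdeal q hc he ((Submodule.eq_top_iff'.mp htop) 1)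
  have := Submodule.Quotient.nontrivial_iff.mpr hproper
  exact (lift hX).toRingHom.domain_nontrivial

lemma nontrivial_Eqm (hn : 2 ≤ n) (hq : q ≠ 0) {F : Matrix (Fin n) (Fin n) k}
    (hF : IsUnit F.det) (htr : q ^ 2 + (F * F⁻¹ᵀ).trace * q + 1 = 0) :
    Nontrivial (BB k (Eqm k q) F) := by
  let φ := algebraMap k (AlgebraicClosure k)
  have htrace : ((F.map φ) * (F.map φ)⁻¹ᵀ).trace = φ (F * F⁻¹ᵀ).trace := by
    rw [inv_map_algebraMap hF, ← Matrix.transpose_map, ← Matrix.map_mul]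
    exact (AddMonoidHom.map_trace φ.toAddMonoidHom _).symm
  have : Nontrivial (BB (AlgebraicClosure k) ((Eqm k q).map φ) (F.map φ)) := by
    rw [map_Eqm]
    refine nontrivial_Eqm_of_isAlgClosed hn ((map_ne_zero φ).mpr hq) ?_ ?_
    · simpa only [RingHom.map_det, RingHom.mapMatrix_apply] using hF.map φ
    · rw [htrace]
      simpa using congrArg φ htr
  exact nontrivial_of_nontrivial_map (L := AlgebraicClosure k) hF

end BB

end Eqm

/-- **Statement 15.** If `q ∈ k*` satisfies `q² + tr(F·ᵀF⁻¹)·q + 1 = 0`, then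
`B(E_q,F)` is a `B(E_q)`-`B(F)`-bigalois extension: it is non-zero, the left
coaction `α` exists, is unique and has bijective Galois map `κₗ`, and the right
coaction `β` exists, is unique and has bijective Galois map `κᵣ`. -/
theorem BB_Eq_bigalois {n : ℕ} (hn : 2 ≤ n) (q : k) (hq : q ≠ 0)
    (F : Matrix (Fin n) (Fin n) k) (hF : IsUnit F.det)
    (htr : q ^ 2 + (F * F⁻¹ᵀ).trace * q + 1 = 0) :
    (1 : BB k (Eqm k q) F) ≠ 0 ∧
    (∃! α : BB k (Eqm k q) F →ₐ[k] (BB k (Eqm k q) (Eqm k q) ⊗[k] BB k (Eqm k q) F),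
      ∀ i j, α (ZMat k (Eqm k q) F i j) =
        ∑ l, ZMat k (Eqm k q) (Eqm k q) i l ⊗ₜ[k] ZMat k (Eqm k q) F l j) ∧
    (∀ α : BB k (Eqm k q) F →ₐ[k] (BB k (Eqm k q) (Eqm k q) ⊗[k] BB k (Eqm k q) F),
      (∀ i j, α (ZMat k (Eqm k q) F i j) =
        ∑ l, ZMat k (Eqm k q) (Eqm k q) i l ⊗ₜ[k] ZMat k (Eqm k q) F l j) →
      Function.Bijective
        ((LinearMap.lTensor (BB k (Eqm k q) (Eqm k q)) (LinearMap.mul' k (BB k (Eqm k q) F))) ∘ₗ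
          (TensorProduct.assoc k (BB k (Eqm k q) (Eqm k q)) (BB k (Eqm k q) F)
            (BB k (Eqm k q) F)).toLinearMap ∘ₗ
          (LinearMap.rTensor (BB k (Eqm k q) F) α.toLinearMap) :
          (BB k (Eqm k q) F ⊗[k] BB k (Eqm k q) F) →ₗ[k]
            (BB k (Eqm k q) (Eqm k q) ⊗[k] BB k (Eqm k q) F))) ∧
    (∃! β : BB k (Eqm k q) F →ₐ[k] (BB k (Eqm k q) F ⊗[k] BB k F F),
      ∀ i j, β (ZMat k (Eqm k q) F i j) =
        ∑ l, ZMat k (Eqm k q) F i l ⊗ₜ[k] ZMat k F F l j) ∧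
    (∀ β : BB k (Eqm k q) F →ₐ[k] (BB k (Eqm k q) F ⊗[k] BB k F F),
      (∀ i j, β (ZMat k (Eqm k q) F i j) =
        ∑ l, ZMat k (Eqm k q) F i l ⊗ₜ[k] ZMat k F F l j) →
      Function.Bijective
        ((LinearMap.rTensor (BB k F F) (LinearMap.mul' k (BB k (Eqm k q) F))) ∘ₗ
          (TensorProduct.assoc k (BB k (Eqm k q) F) (BB k (Eqm k q) F)
            (BB k F F)).symm.toLinearMap ∘ₗ
          (LinearMap.lTensor (BB k (Eqm k q) F) β.toLinearMap) :
          (BB k (Eqm k q) F ⊗[k] BB k (Eqm k q) F) →ₗ[k]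
            (BB k (Eqm k q) F ⊗[k] BB k F F))) := by
  have hE := isUnit_det_Eqm hq
  have := BB.nontrivial_Eqm hn hq hF htr
  exact ⟨one_ne_zero,
    BB.existsUnique_comul hE, fun _ hα => BB.bijective_galoisLeft hE hF hα,
    BB.existsUnique_comul hF, fun _ hβ => BB.bijective_galoisRight hE hF hβ⟩
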